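/- Grigorchuk–Nekrashevych–Suschanskiǐ: For every d ≥ 2, the group ℛ_d of rational homeomorphisms of the d-ary Cantor space 𝔠_d is isomorphic as a group to the rational group ℛ = ℛ_2 of rational homeomorphisms of the binary Cantor space. -/

import Mathlib

/-- Concatenation of a finite word with an infinite sequence. -/
def wordAppend {A : Type*} (α : List A) (x : ℕ → A) : ℕ → A :=
  fun n => if h : n < α.length then α.get ⟨n, h⟩ else x (n - α.length)

/-- The cone determined by a finite word: all sequences having it as a prefix. -/
def cone {A : Type*} (α : List A) : Set (ℕ → A) := Set.range (wordAppend α)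

/-- `g` is the local action of the homeomorphism `f` at the word `α`:
there is a word `β` with `f (α ⌢ x) = β ⌢ (g x)` for all `x`, and `β` is the longest
common prefix of the image of the cone `C_α` (witnessed by two image points that
differ in the coordinate immediately after `β`). -/
def IsLocalAction {A : Type*} [TopologicalSpace A] (f : (ℕ → A) ≃ₜ (ℕ → A)) (α : List A)
    (g : (ℕ → A) → (ℕ → A)) : Prop :=
  ∃ β : List A, (∀ x, f (wordAppend α x) = wordAppend β (g x)) ∧ ∃ x y, g x 0 ≠ g y 0

/-- A homeomorphism of a Cantor space of sequences is rational if it has only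
finitely many distinct local actions. -/
def IsRational {A : Type*} [TopologicalSpace A] (f : (ℕ → A) ≃ₜ (ℕ → A)) : Prop :=
  {g | ∃ α, IsLocalAction f α g}.Finite

/-- The group of self-homeomorphisms of a topological space, under composition. -/
instance homeoGroup {X : Type*} [TopologicalSpace X] : Group (X ≃ₜ X) where
  mul f g := g.trans f
  one := Homeomorph.refl X
  inv := Homeomorph.symm
  mul_assoc _ _ _ := rfl
  one_mul _ := Homeomorph.ext fun _ => rfl
  mul_one _ := Homeomorph.ext fun _ => rfl
  inv_mul_cancel := Homeomorph.self_trans_symm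

section Helpers

theorem wa_nil {A : Type*} (x : ℕ → A) : wordAppend [] x = x := by
  funext n; simp [wordAppend]

theorem wa_cons_zero {A : Type*} (a : A) (l : List A) (x : ℕ → A) :
    wordAppend (a :: l) x 0 = a := by simp [wordAppend]

theorem wa_cons_succ {A : Type*} (a : A) (l : List A) (x : ℕ → A) (n : ℕ) :
    wordAppend (a :: l) x (n + 1) = wordAppend l x n := by simp [wordAppend]

theorem wa_cons_shift {A : Type*} (a : A) (l : List A) (x : ℕ → A) :
    (fun n => wordAppend (a :: l) x (n + 1)) = wordAppend l x := by
  funext n; exact wa_cons_succ _ _ _ _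

theorem wa_append {A : Type*} (l l' : List A) (x : ℕ → A) :
    wordAppend (l ++ l') x = wordAppend l (wordAppend l' x) := by
  induction l with
  | nil => simp [wa_nil]
  | cons a l ih =>
    funext n
    cases n with
    | zero => simp [wa_cons_zero]
    | succ n => simp [wa_cons_succ, ih]

/-- `g` is obtained from `k` by removing the longest common prefix of the image. -/
def Red {X B : Type*} (k g : X → ℕ → B) : Prop :=
  ∃ β : List B, (∀ x, k x = wordAppend β (g x)) ∧ ∃ x y, g x 0 ≠ g y 0

theorem Red.unique_aux {X B : Type*} (g g' : X → ℕ → B) (hg : ∃ x y, g x 0 ≠ g y 0)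
    (hg' : ∃ x y, g' x 0 ≠ g' y 0) (β : List B) : ∀ β' : List B,
    (∀ x, wordAppend β (g x) = wordAppend β' (g' x)) → g = g' := by
  induction β with
  | nil =>
    intro β' h
    cases β' with
    | nil => funext x; simpa [wa_nil] using h x
    | cons b β' =>
      obtain ⟨x, y, hxy⟩ := hg
      have hx := congrFun (h x) 0
      have hy := congrFun (h y) 0
      simp only [wa_nil, wa_cons_zero] at hx hy
      exact absurd (hx.trans hy.symm) hxy
  | cons a β ih =>
    intro β' h
    cases β' with
    | nil =>
      obtain ⟨x, y, hxy⟩ := hg'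
      have hx := congrFun (h x) 0
      have hy := congrFun (h y) 0
      simp only [wa_nil, wa_cons_zero] at hx hy
      exact absurd (hx.symm.trans hy) hxy
    | cons b β' =>
      apply ih β'
      intro x
      funext n
      have := congrFun (h x) (n + 1)
      simpa only [wa_cons_succ] using this

theorem Red.unique {X B : Type*} {k g g' : X → ℕ → B} (h : Red k g) (h' : Red k g') :
    g = g' := by
  obtain ⟨β, h1, h2⟩ := h
  obtain ⟨β', h1', h2'⟩ := h'
  exact Red.unique_aux g g' h2 h2' β β' fun x => (h1 x).symm.trans (h1' x)

theorem Red.exists_aux {X B : Type*} (n : ℕ) : ∀ k : X → ℕ → B,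
    (∃ x y, k x n ≠ k y n) → ∃ g, Red k g := by
  induction n with
  | zero => exact fun k h => ⟨k, [], fun x => (wa_nil _).symm, h⟩
  | succ n ih =>
    intro k h
    by_cases h0 : ∃ x y, k x 0 ≠ k y 0
    · exact ⟨k, [], fun x => (wa_nil _).symm, h0⟩
    · push Not at h0
      obtain ⟨g, β, h1, h2⟩ := ih (fun x i => k x (i + 1)) h
      obtain ⟨x₀, -, -⟩ := h
      refine ⟨g, k x₀ 0 :: β, fun x => ?_, h2⟩
      funext i
      cases i with
      | zero => rw [wa_cons_zero]; exact h0 _ _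
      | succ i => rw [wa_cons_succ, ← h1 x]

theorem Red.exists {X B : Type*} {k : X → ℕ → B} (h : ∃ x y, k x ≠ k y) : ∃ g, Red k g := by
  obtain ⟨x, y, hxy⟩ := h
  obtain ⟨n, hn⟩ := Function.ne_iff.mp hxy
  exact Red.exists_aux n k ⟨x, y, hn⟩

theorem Red.nonconst {X B : Type*} {k g : X → ℕ → B} (h : Red k g) : ∃ x y, k x ≠ k y := by
  obtain ⟨β, h1, x, y, hxy⟩ := h
  refine ⟨x, y, fun he => hxy ?_⟩
  rw [h1, h1] at he
  clear h1
  induction β with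
  | nil => rw [wa_nil, wa_nil] at he; rw [he]
  | cons b β ih =>
    apply ih
    rw [← wa_cons_shift b β (g x), he, wa_cons_shift]

theorem Red.of_append {X B : Type*} {k k' g : X → ℕ → B} {α : List B} (h : Red k' g)
    (hk : ∀ x, k' x = wordAppend α (k x)) : Red k g := by
  obtain ⟨x, y, hxy⟩ := h.nonconst
  have : ∃ x y, k x ≠ k y := ⟨x, y, fun he => hxy (by rw [hk, hk, he])⟩
  obtain ⟨g', hg'⟩ := Red.exists this
  have h2 : Red k' g' := by
    obtain ⟨β, h1, h2⟩ := hg'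
    exact ⟨α ++ β, fun x => by rw [hk, h1, wa_append], h2⟩
  rw [h.unique h2]
  exact hg'

theorem Red.finite {X B : Type*} {S : Set (X → ℕ → B)} (hS : S.Finite) :
    {g | ∃ k ∈ S, Red k g}.Finite := by
  have : {g | ∃ k ∈ S, Red k g} = ⋃ k ∈ S, {g | Red k g} := by ext g; simp
  rw [this]
  refine hS.biUnion fun k _ => Set.Subsingleton.finite ?_
  intro g hg g' hg'
  exact Red.unique hg hg'

/-- A map between sequence spaces with finitely many local actions. -/
def Rat' {A B : Type*} (F : (ℕ → A) → ℕ → B) : Prop :=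
  {g | ∃ α : List A, Red (fun x => F (wordAppend α x)) g}.Finite

theorem Rat'.comp {A B C : Type*} {F : (ℕ → B) → ℕ → C} {G : (ℕ → A) → ℕ → B}
    (hF : Rat' F) (hG : Rat' G) : Rat' (fun x => F (G x)) := by
  refine (Red.finite (Set.Finite.image2 (fun (p : (ℕ → B) → ℕ → C) (q : (ℕ → A) → ℕ → B) =>
    fun x => p (q x)) hF hG)).subset ?_
  rintro g ⟨α, h⟩
  obtain ⟨x, y, hxy⟩ := h.nonconst
  obtain ⟨g1, hg1⟩ := Red.exists (k := fun x => G (wordAppend α x))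
    ⟨x, y, fun he => hxy (congrArg F he)⟩
  have hg1' := hg1
  obtain ⟨β, hβ, -⟩ := hg1
  obtain ⟨g2, hg2⟩ := Red.exists (k := fun x => F (wordAppend β x))
    ⟨g1 x, g1 y, fun he => hxy (by
      have hx := hβ x
      have hy := hβ y
      simp only at hx hy he ⊢
      rw [hx, hy, he])⟩
  have hg2' := hg2
  obtain ⟨γ, hγ, -⟩ := hg2
  refine ⟨_, ⟨g2, ⟨β, hg2'⟩, g1, ⟨α, hg1'⟩, rfl⟩, h.of_append (α := γ) fun x => ?_⟩
  have hx := hβ x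
  simp only at hx ⊢
  rw [hx]
  exact hγ _

/-- The code words. -/
def cw : ℕ → ℕ → List Bool
  | 0, _ => []
  | _ + 1, 0 => [false]
  | m + 1, i + 1 => true :: cw m i

/-- The first decoded digit. -/
def dg : ℕ → (ℕ → Bool) → ℕ
  | 0, _ => 0
  | m + 1, b => bif b 0 then dg m (fun n => b (n + 1)) + 1 else 0

/-- The rest after the first decoded digit. -/
def rs : ℕ → (ℕ → Bool) → (ℕ → Bool)
  | 0, b => b
  | m + 1, b => bif b 0 then rs m (fun n => b (n + 1)) else fun n => b (n + 1)

theorem dg_le (m : ℕ) : ∀ b, dg m b ≤ m := by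
  induction m with
  | zero => intro b; simp [dg]
  | succ m ih =>
    intro b
    have := ih (fun n => b (n + 1))
    cases hb : b 0 <;> simp [dg, hb, this]

theorem dg_cw (m : ℕ) : ∀ i ≤ m, ∀ b, dg m (wordAppend (cw m i) b) = i := by
  induction m with
  | zero => intro i hi b; simp [dg]; omega
  | succ m ih =>
    intro i hi b
    cases i with
    | zero => simp [dg, cw, wa_cons_zero]
    | succ i => simp [dg, cw, wa_cons_zero, wa_cons_succ, ih i (by omega) b]

theorem rs_cw (m : ℕ) : ∀ i ≤ m, ∀ b, rs m (wordAppend (cw m i) b) = b := by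
  induction m with
  | zero => intro i hi b; simp [rs, cw, wa_nil]
  | succ m ih =>
    intro i hi b
    cases i with
    | zero => simp [rs, cw, wa_cons_zero, wa_cons_succ, wa_nil]
    | succ i => simp [rs, cw, wa_cons_zero, wa_cons_succ, ih i (by omega) b]

theorem cw_dg_rs (m : ℕ) : ∀ b, wordAppend (cw m (dg m b)) (rs m b) = b := by
  induction m with
  | zero => intro b; simp [rs, cw, wa_nil]
  | succ m ih =>
    intro b
    have := ih (fun n => b (n + 1))
    funext n
    cases hb : b 0 <;> cases n <;>
      simp [dg, rs, cw, hb, wa_cons_zero, wa_cons_succ, wa_nil, this]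

theorem continuous_shift : Continuous (fun (b : ℕ → Bool) (n : ℕ) => b (n + 1)) := by
  fun_prop

theorem continuous_bif {X Y : Type*} [TopologicalSpace X] [TopologicalSpace Y] {c : X → Bool}
    {f g : X → Y} (hc : Continuous c) (hf : Continuous f) (hg : Continuous g) :
    Continuous (fun x => bif c x then f x else g x) := by
  rw [continuous_iff_continuousAt]
  intro x
  have h : ∀ᶠ y in nhds x, c y = c x :=
    hc.continuousAt.eventually (p := fun z => z = c x) (by simp)
  cases hx : c x with
  | true =>
    refine hf.continuousAt.congr ?_
    filter_upwards [h] with y hy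
    simp [hy, hx]
  | false =>
    refine hg.continuousAt.congr ?_
    filter_upwards [h] with y hy
    simp [hy, hx]

theorem continuous_dg (m : ℕ) : Continuous (dg m) := by
  induction m with
  | zero => exact continuous_const
  | succ m ih =>
    exact continuous_bif (continuous_apply 0)
      (continuous_of_discreteTopology (f := fun n : ℕ => n + 1) |>.comp
        (ih.comp continuous_shift)) continuous_const

theorem continuous_rs (m : ℕ) : Continuous (rs m) := by
  induction m with
  | zero => exact continuous_id
  | succ m ih =>
    exact continuous_bif (continuous_apply 0) (ih.comp continuous_shift) continuous_shift

/-- The decoding map. -/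
def dec (m : ℕ) (b : ℕ → Bool) : ℕ → Fin (m + 1)
  | 0 => Fin.ofNat (m + 1) (dg m b)
  | n + 1 => dec m (rs m b) n

theorem continuous_dec (m : ℕ) : Continuous (dec m) := by
  refine continuous_pi fun n => ?_
  induction n with
  | zero => exact continuous_of_discreteTopology (f := Fin.ofNat (m + 1)) |>.comp (continuous_dg m)
  | succ n ih => exact ih.comp (continuous_rs m)

theorem dec_cw (m : ℕ) (i : Fin (m + 1)) (b : ℕ → Bool) :
    dec m (wordAppend (cw m i) b) = wordAppend [i] (dec m b) := by
  funext n
  have hi : (i : ℕ) ≤ m := by omega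
  cases n with
  | zero => simp [dec, wa_cons_zero, dg_cw m i hi]
  | succ n => simp [dec, wa_cons_succ, wa_nil, rs_cw m i hi]

/-- Code of a word. -/
def cws (m : ℕ) : List (Fin (m + 1)) → List Bool
  | [] => []
  | i :: l => cw m i ++ cws m l

theorem dec_cws (m : ℕ) (l : List (Fin (m + 1))) (b : ℕ → Bool) :
    dec m (wordAppend (cws m l) b) = wordAppend l (dec m b) := by
  induction l with
  | nil => simp [cws, wa_nil]
  | cons i l ih =>
    rw [cws, wa_append, dec_cw, ih, ← wa_append]; rfl

theorem dec_injective (m : ℕ) (hm : 1 ≤ m) : Function.Injective (dec m) := by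
  have key : ∀ N n, n < N → ∀ b b', dec m b = dec m b' → b n = b' n := by
    intro N
    induction N with
    | zero => intro n hn; omega
    | succ N ih =>
      intro n hn b b' h
      have h0 : dg m b = dg m b' := by
        have := congrArg Fin.val (congrFun h 0)
        have h1 := dg_le m b
        have h2 := dg_le m b'
        simp only [dec, Fin.val_ofNat] at this
        rwa [Nat.mod_eq_of_lt (by omega), Nat.mod_eq_of_lt (by omega)] at this
      have hr : dec m (rs m b) = dec m (rs m b') := by
        funext k; exact congrFun h (k + 1)
      rw [← cw_dg_rs m b, ← cw_dg_rs m b', h0]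
      have hpos : 1 ≤ (cw m (dg m b')).length := by
        obtain ⟨m, rfl⟩ : ∃ k, m = k + 1 := ⟨m - 1, by omega⟩
        cases dg (m + 1) b' <;> simp [cw]
      unfold wordAppend
      split_ifs with hlt
      · rfl
      · exact ih _ (by omega) _ _ hr
  intro b b' h
  funext n
  exact key (n + 1) n (by omega) b b' h

theorem wa_approx {A : Type*} (x : ℕ → A) (n : ℕ) :
    ∃ l : List A, ∀ y, ∀ i < n, wordAppend l y i = x i := by
  refine ⟨List.ofFn (fun i : Fin n => x i), fun y i hi => ?_⟩
  simp [wordAppend, hi]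

theorem dec_surjective (m : ℕ) : Function.Surjective (dec m) := by
  have hc : IsClosed (Set.range (dec m)) := (isCompact_range (continuous_dec m)).isClosed
  intro x
  change x ∈ Set.range (dec m)
  choose l hl using fun n => wa_approx x n
  refine hc.mem_of_tendsto (b := Filter.atTop)
    (f := fun n => dec m (wordAppend (cws m (l n)) (fun _ => true))) ?_
    (Filter.Eventually.of_forall fun n => ⟨_, rfl⟩)
  rw [tendsto_pi_nhds]
  intro i
  refine tendsto_const_nhds.congr' ?_
  filter_upwards [Filter.eventually_gt_atTop i] with n hn
  rw [dec_cws, hl n _ i hn]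

theorem cw_self (m : ℕ) : cw m m = List.replicate m true := by
  induction m with
  | zero => rfl
  | succ m ih => simp [cw, ih, List.replicate_succ]

theorem cw_lt (m : ℕ) : ∀ j < m, cw m j = List.replicate j true ++ [false] := by
  induction m with
  | zero => intro j hj; omega
  | succ m ih =>
    intro j hj
    cases j with
    | zero => rfl
    | succ j => simp [cw, ih j (by omega), List.replicate_succ]

theorem dec_state (m : ℕ) (hm : 1 ≤ m) (β : List Bool) : ∃ α, ∃ j < m, ∀ x,
    dec m (wordAppend β x) = wordAppend α (dec m (wordAppend (List.replicate j true) x)) := by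
  induction β using List.reverseRecOn with
  | nil => exact ⟨[], 0, by omega, fun x => by simp [wa_nil]⟩
  | append_singleton β t ih =>
    obtain ⟨α, j, hj, h⟩ := ih
    cases t with
    | false =>
      refine ⟨α ++ [⟨j, by omega⟩], 0, by omega, fun x => ?_⟩
      rw [wa_append, h, ← wa_append, ← cw_lt m j hj, wa_append]
      rw [dec_cw m ⟨j, by omega⟩]
      simp [wa_nil]
    | true =>
      by_cases hj' : j + 1 < m
      · refine ⟨α, j + 1, hj', fun x => ?_⟩
        rw [wa_append, h, ← wa_append, List.replicate_succ']
      · obtain rfl : m = j + 1 := by omega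
        refine ⟨α ++ [⟨j + 1, by omega⟩], 0, by omega, fun x => ?_⟩
        rw [wa_append, h, ← wa_append, ← List.replicate_succ', ← cw_self, wa_append]
        rw [dec_cw (j + 1) ⟨j + 1, by omega⟩]
        simp [wa_nil]

theorem rat_dec (m : ℕ) (hm : 1 ≤ m) : Rat' (dec m) := by
  refine (Red.finite ((Set.finite_lt_nat m).image
    (fun j => fun x => dec m (wordAppend (List.replicate j true) x)))).subset ?_
  rintro g ⟨β, h⟩
  obtain ⟨α, j, hj, hx⟩ := dec_state m hm β
  exact ⟨_, ⟨j, hj, rfl⟩, h.of_append hx⟩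

/-- The decoding homeomorphism. -/
noncomputable def decHomeo (m : ℕ) (hm : 1 ≤ m) : (ℕ → Bool) ≃ₜ (ℕ → Fin (m + 1)) :=
  Continuous.homeoOfEquivCompactToT2
    (f := Equiv.ofBijective (dec m) ⟨dec_injective m hm, dec_surjective m⟩) (continuous_dec m)

theorem rat_decHomeo_symm (m : ℕ) (hm : 1 ≤ m) : Rat' (decHomeo m hm).symm := by
  refine (Red.finite (Set.finite_singleton (fun x => (decHomeo m hm).symm x))).subset ?_
  rintro g ⟨α, h⟩
  refine ⟨_, rfl, h.of_append (α := cws m α) fun x => ?_⟩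
  rw [Homeomorph.symm_apply_eq]
  change _ = dec m _
  rw [dec_cws]
  congr 1
  exact ((decHomeo m hm).apply_symm_apply x).symm

end Helpers

/-!
Grigorchuk–Nekrashevych–Suschanskiǐ (2000): for every `d ≥ 2` the group `ℛ_d` of
rational homeomorphisms of the `d`-ary Cantor space `ℕ → Fin d` is isomorphic to
the rational group `ℛ = ℛ_2` of rational homeomorphisms of the binary Cantor space
`ℕ → Bool`.  (The rational homeomorphisms do form subgroups; here these subgroups
are given by their defining membership property.)
-/
theorem rational_group_d_ary_iso_binary (d : ℕ) (hd : 2 ≤ d)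
    (Rd : Subgroup ((ℕ → Fin d) ≃ₜ (ℕ → Fin d)))
    (hRd : ∀ f, f ∈ Rd ↔ IsRational f)
    (R2 : Subgroup ((ℕ → Bool) ≃ₜ (ℕ → Bool)))
    (hR2 : ∀ f, f ∈ R2 ↔ IsRational f) :
    Nonempty (↥Rd ≃* ↥R2) := by
  obtain ⟨m, rfl⟩ : ∃ m, d = m + 1 := ⟨d - 1, by omega⟩
  have hm : 1 ≤ m := by omega
  let e := decHomeo m hm
  have he : Rat' e := rat_dec m hm
  have hes : Rat' e.symm := rat_decHomeo_symm m hm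
  refine ⟨{
    toFun := fun f => ⟨(e.trans f.1).trans e.symm, (hR2 _).2 ?_⟩
    invFun := fun f => ⟨(e.symm.trans f.1).trans e, (hRd _).2 ?_⟩
    left_inv := ?_
    right_inv := ?_
    map_mul' := ?_ }⟩
  · have hf : Rat' f.1 := (hRd _).1 f.2
    exact hes.comp (hf.comp he)
  · have hf : Rat' f.1 := (hR2 _).1 f.2
    exact he.comp (hf.comp hes)
  · intro f
    apply Subtype.ext
    apply Homeomorph.ext
    intro x
    simp
  · intro f
    apply Subtype.ext
    apply Homeomorph.ext
    intro x
    simp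
  · intro f g
    apply Subtype.ext
    apply Homeomorph.ext
    intro x
    change e.symm (f.1 (g.1 (e x))) = e.symm (f.1 (e (e.symm (g.1 (e x)))))
    rw [e.apply_symm_apply]
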